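/- arXiv:1210.3742 — 2 statements merged into one kernel-verified Lean document; each statement's English description precedes it below -/
import Mathlib

section
/- Let 0 ≤ m < n and embed the unit m-sphere S^m = {x ∈ ℝ^n : x_{m+2} = ⋯ = x_n = 0, ‖x‖ = 1} in ℝ^n, and set s = n − m. Then for every ε with 0 < ε < 1, the Lebesgue volume of the ε-neighborhood {x ∈ ℝ^n : infDist(x, S^m) ≤ ε} equals 2 · ω_{m+1} · ε^s · ∑_{0 ≤ i ≤ m, i even} (ω_{s+i}/ω_{i+1}) · ((m+1) choose (i+1)) · ε^i, where ω_k = π^{k/2}/Γ(k/2+1) is the volume of the k-dimensional unit ball. -/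
open MeasureTheory Metric Finset

/-- The volume of the `k`-dimensional unit ball, `ω_k = π^{k/2} / Γ(k/2 + 1)`. -/
noncomputable def unitBallVol (k : ℕ) : ℝ :=
  Real.pi ^ ((k : ℝ) / 2) / Real.Gamma ((k : ℝ) / 2 + 1)

/-!
Write `x = u + w` with `u` in the subspace spanned by the sphere and `w` orthogonal to it. By
Pythagoras the tube is `(‖u‖ - R)² + ‖w‖² ≤ ε²`, so over a fixed `w` it is a spherical shell with
radii `R ± r`, where `r = √(ε² - ‖w‖²)`. Its volume `ω_k ((R + r)^k - (R - r)^k)` is a combination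
of the odd powers of `r`. The integral of `r^p` over `w` is found by slicing a ball of radius `ε`
in a space with `p` further dimensions: its slices are the `p`-dimensional balls of radius `r`.
-/

open Module (finrank finrank_pos)

lemma unitBallVol_eq_sqrt_pow (k : ℕ) :
    unitBallVol k = √Real.pi ^ k / Real.Gamma ((k : ℝ) / 2 + 1) := by
  rw [unitBallVol, Real.rpow_div_two_eq_sqrt _ Real.pi_pos.le, Real.rpow_natCast]

lemma unitBallVol_pos (k : ℕ) : 0 < unitBallVol k :=
  div_pos (Real.rpow_pos_of_pos Real.pi_pos _) (Real.Gamma_pos_of_pos (by positivity))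

lemma add_pow_sub_sub_pow {A : Type*} [CommRing A] (x y : A) (k : ℕ) :
    (x + y) ^ k - (x - y) ^ k =
      ∑ i ∈ range k with Even i, 2 * k.choose (i + 1) * x ^ (k - (i + 1)) * y ^ (i + 1) := by
  rw [sub_eq_add_neg x y, add_comm x, add_comm x, add_pow, add_pow, ← sum_sub_distrib,
    sum_range_succ', sum_filter]
  simp only [pow_zero, sub_self, add_zero]
  refine sum_congr rfl fun i _ ↦ ?_
  split_ifs with hi
  · rw [hi.add_one.neg_pow]
    ring
  · rw [(Nat.not_even_iff_odd.mp hi).add_one.neg_pow, sub_self]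

section Volume

variable {E : Type*} [NormedAddCommGroup E] [InnerProductSpace ℝ E] [FiniteDimensional ℝ E]
  [MeasurableSpace E] [BorelSpace E] [Nontrivial E]

lemma volume_closedBall_eq_unitBallVol (x : E) {r : ℝ} (hr : 0 ≤ r) :
    volume (closedBall x r) = ENNReal.ofReal (unitBallVol (finrank ℝ E) * r ^ finrank ℝ E) := by
  rw [InnerProductSpace.volume_closedBall, ← unitBallVol_eq_sqrt_pow, ← ENNReal.ofReal_pow hr,
    ← ENNReal.ofReal_mul (by positivity), mul_comm]

lemma volume_closedBall_sdiff_ball (x : E) {r₁ r₂ : ℝ} (hr₁ : 0 ≤ r₁) (hr : r₁ ≤ r₂) :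
    volume (closedBall x r₂ \ ball x r₁) =
      ENNReal.ofReal (unitBallVol (finrank ℝ E) * (r₂ ^ finrank ℝ E - r₁ ^ finrank ℝ E)) := by
  have hsub : ball x r₁ ⊆ closedBall x r₂ :=
    ball_subset_closedBall.trans (closedBall_subset_closedBall hr)
  rw [measure_sdiff hsub measurableSet_ball.nullMeasurableSet measure_ball_lt_top.ne,
    ← Measure.addHaar_closedBall_eq_addHaar_ball, volume_closedBall_eq_unitBallVol _ (hr₁.trans hr),
    volume_closedBall_eq_unitBallVol _ hr₁,
    ← ENNReal.ofReal_sub _ (mul_nonneg (unitBallVol_pos _).le (pow_nonneg hr₁ _)), mul_sub]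

lemma volume_setOf_sq_norm_le (t : ℝ) :
    volume {x : E | ‖x‖ ^ 2 ≤ t} =
      ENNReal.ofReal (unitBallVol (finrank ℝ E) * √t ^ finrank ℝ E) := by
  rcases le_or_gt 0 t with ht | ht
  · rw [← volume_closedBall_eq_unitBallVol (0 : E) (Real.sqrt_nonneg t)]
    congr 1
    ext x
    rw [mem_closedBall_zero_iff, Real.le_sqrt (norm_nonneg x) ht, Set.mem_ofPred_eq]
  · have hempty : {x : E | ‖x‖ ^ 2 ≤ t} = ∅ :=
      Set.eq_empty_of_forall_notMem fun x hx ↦ (ht.trans_le (sq_nonneg ‖x‖)).not_ge hx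
    simp [hempty, Real.sqrt_eq_zero_of_nonpos ht.le, finrank_pos.ne']

lemma volume_setOf_sq_norm_sub_le {R t : ℝ} (hR : 0 ≤ R) (ht : t ≤ R ^ 2) :
    volume {x : E | (‖x‖ - R) ^ 2 ≤ t} =
      ENNReal.ofReal
        (unitBallVol (finrank ℝ E) * ((R + √t) ^ finrank ℝ E - (R - √t) ^ finrank ℝ E)) := by
  rcases le_or_gt 0 t with ht₀ | ht₀
  · rw [← volume_closedBall_sdiff_ball (0 : E) (sub_nonneg.mpr (Real.sqrt_le_left hR |>.mpr ht))
      (by linarith [Real.sqrt_nonneg t])]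
    congr 1
    ext x
    rw [Set.mem_ofPred_eq, ← Real.sqrt_le_sqrt_iff ht₀, Real.sqrt_sq_eq_abs, abs_le, Set.mem_sdiff,
      mem_closedBall_zero_iff, mem_ball_zero_iff, not_lt, and_comm, sub_le_iff_le_add',
      neg_le_sub_iff_le_add, sub_le_iff_le_add]
  · have hempty : {x : E | (‖x‖ - R) ^ 2 ≤ t} = ∅ :=
      Set.eq_empty_of_forall_notMem fun x hx ↦ (ht₀.trans_le (sq_nonneg (‖x‖ - R))).not_ge hx
    simp [hempty, Real.sqrt_eq_zero_of_nonpos ht₀.le]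

end Volume

section Slicing

variable {U V : Type*}
  [NormedAddCommGroup U] [InnerProductSpace ℝ U] [FiniteDimensional ℝ U]
  [MeasurableSpace U] [BorelSpace U]
  [NormedAddCommGroup V] [InnerProductSpace ℝ V] [FiniteDimensional ℝ V]
  [MeasurableSpace V] [BorelSpace V]

lemma volume_withLp_prod_eq_lintegral {S : Set (WithLp 2 (U × V))} (hS : MeasurableSet S) :
    volume S = ∫⁻ v : V, volume {u : U | WithLp.toLp 2 (u, v) ∈ S} := by
  rw [← (WithLp.volume_preserving_toLp U V).measure_preimage hS.nullMeasurableSet,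
    Measure.volume_eq_prod,
    Measure.prod_apply_symm ((WithLp.volume_preserving_toLp U V).measurable hS)]
  rfl

lemma lintegral_sqrt_sub_sq_norm_pow {p : ℕ} (hp : p ≠ 0) {ε : ℝ} (hε : 0 ≤ ε) :
    ∫⁻ v : V, ENNReal.ofReal (√(ε ^ 2 - ‖v‖ ^ 2) ^ p) =
      ENNReal.ofReal (unitBallVol (finrank ℝ V + p) / unitBallVol p *
        ε ^ (finrank ℝ V + p)) := by
  let U := EuclideanSpace ℝ (Fin p)
  have : NeZero p := ⟨hp⟩
  have : Nontrivial (WithLp 2 (U × V)) := (WithLp.equiv 2 (U × V)).nontrivial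
  have hω := unitBallVol_pos p
  have hrank : finrank ℝ (WithLp 2 (U × V)) = finrank ℝ V + p := by
    simp [U, (WithLp.linearEquiv 2 ℝ (U × V)).finrank_eq, add_comm]
  have hslice (v : V) : volume {u : U | WithLp.toLp 2 (u, v) ∈ closedBall 0 ε} =
      ENNReal.ofReal (unitBallVol p) * ENNReal.ofReal (√(ε ^ 2 - ‖v‖ ^ 2) ^ p) := by
    have hmem (u : U) : WithLp.toLp 2 (u, v) ∈ closedBall (0 : WithLp 2 (U × V)) ε ↔
        ‖u‖ ^ 2 ≤ ε ^ 2 - ‖v‖ ^ 2 := by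
      rw [mem_closedBall_zero_iff, ← sq_le_sq₀ (norm_nonneg _) hε,
        WithLp.prod_norm_sq_eq_of_L2, le_sub_iff_add_le, WithLp.toLp_fst,
        WithLp.toLp_snd]
    simp only [hmem, volume_setOf_sq_norm_le, U, finrank_euclideanSpace_fin,
      ENNReal.ofReal_mul hω.le]
  have hball := volume_closedBall_eq_unitBallVol (0 : WithLp 2 (U × V)) hε
  rw [volume_withLp_prod_eq_lintegral measurableSet_closedBall, lintegral_congr hslice, hrank,
    lintegral_const_mul' _ _ ENNReal.ofReal_ne_top] at hball
  rw [div_mul_eq_mul_div, ENNReal.ofReal_div_of_pos hω, ← hball, mul_comm,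
    ENNReal.mul_div_cancel_right (ENNReal.ofReal_pos.mpr hω).ne' ENNReal.ofReal_ne_top]

lemma lintegral_add_sqrt_pow_sub_sub_sqrt_pow (k : ℕ) {R ε : ℝ} (hR : 0 ≤ R) (hε : 0 ≤ ε) :
    ∫⁻ v : V, ENNReal.ofReal
        ((R + √(ε ^ 2 - ‖v‖ ^ 2)) ^ k - (R - √(ε ^ 2 - ‖v‖ ^ 2)) ^ k) =
      ENNReal.ofReal (∑ i ∈ range k with Even i, 2 * k.choose (i + 1) * R ^ (k - (i + 1)) *
        (unitBallVol (finrank ℝ V + (i + 1)) / unitBallVol (i + 1) *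
          ε ^ (finrank ℝ V + (i + 1)))) := by
  have hω (j : ℕ) : 0 ≤ unitBallVol j := (unitBallVol_pos j).le
  have hcoeff (i : ℕ) : 0 ≤ 2 * k.choose (i + 1) * R ^ (k - (i + 1)) := by positivity
  have hmoment (i : ℕ) : 0 ≤ unitBallVol (finrank ℝ V + (i + 1)) / unitBallVol (i + 1) *
      ε ^ (finrank ℝ V + (i + 1)) :=
    mul_nonneg (div_nonneg (hω _) (hω _)) (pow_nonneg hε _)
  simp_rw [add_pow_sub_sub_pow]
  rw [ENNReal.ofReal_sum_of_nonneg fun i _ ↦ mul_nonneg (hcoeff i) (hmoment i),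
    lintegral_congr fun v ↦ ENNReal.ofReal_sum_of_nonneg fun i _ ↦
      mul_nonneg (hcoeff i) (pow_nonneg (Real.sqrt_nonneg _) _),
    lintegral_finsetSum _ fun i _ ↦ by fun_prop]
  refine sum_congr rfl fun i _ ↦ ?_
  simp_rw [ENNReal.ofReal_mul (hcoeff i)]
  rw [lintegral_const_mul' _ _ ENNReal.ofReal_ne_top,
    lintegral_sqrt_sub_sq_norm_pow i.succ_ne_zero hε]

lemma volume_setOf_sq_norm_fst_sub_add_sq_norm_snd_le [Nontrivial U] {R ε : ℝ}
    (hε : 0 ≤ ε) (hεR : ε ≤ R) :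
    volume {x : WithLp 2 (U × V) | (‖x.fst‖ - R) ^ 2 + ‖x.snd‖ ^ 2 ≤ ε ^ 2} =
      ENNReal.ofReal (unitBallVol (finrank ℝ U) *
        ∑ i ∈ range (finrank ℝ U) with Even i,
          2 * (finrank ℝ U).choose (i + 1) * R ^ (finrank ℝ U - (i + 1)) *
            (unitBallVol (finrank ℝ V + (i + 1)) / unitBallVol (i + 1) *
              ε ^ (finrank ℝ V + (i + 1)))) := by
  have hR : 0 ≤ R := hε.trans hεR
  have hclosed : IsClosed {x : WithLp 2 (U × V) | (‖x.fst‖ - R) ^ 2 + ‖x.snd‖ ^ 2 ≤ ε ^ 2} :=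
    isClosed_le (by fun_prop) continuous_const
  have hslice (v : V) : volume {u : U | (‖u‖ - R) ^ 2 ≤ ε ^ 2 - ‖v‖ ^ 2} = _ :=
    volume_setOf_sq_norm_sub_le hR <|
      (sub_le_self _ (sq_nonneg ‖v‖)).trans (pow_le_pow_left₀ hε hεR 2)
  rw [volume_withLp_prod_eq_lintegral hclosed.measurableSet]
  simp only [Set.mem_ofPred_eq, ← le_sub_iff_add_le, WithLp.toLp_fst, WithLp.toLp_snd, hslice,
    ENNReal.ofReal_mul (unitBallVol_pos _).le]
  rw [lintegral_const_mul' _ _ ENNReal.ofReal_ne_top,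
    lintegral_add_sqrt_pow_sub_sub_sqrt_pow _ hR hε]

end Slicing

lemma infDist_sphere {E : Type*} [NormedAddCommGroup E] [NormedSpace ℝ E] [Nontrivial E]
    (c x : E) {R : ℝ} (hR : 0 ≤ R) : infDist x (sphere c R) = |dist x c - R| := by
  refine le_antisymm ?_ ((le_infDist (NormedSpace.sphere_nonempty.mpr hR)).mpr fun y hy ↦ ?_)
  · obtain ⟨e, he, hxe⟩ : ∃ e : E, ‖e‖ = 1 ∧ x - c = dist x c • e := by
      rcases eq_or_ne x c with rfl | hxc
      · simpa using exists_norm_eq E zero_le_one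
      · have hdist : dist x c ≠ 0 := dist_ne_zero.mpr hxc
        refine ⟨(dist x c)⁻¹ • (x - c), ?_, (smul_inv_smul₀ hdist _).symm⟩
        rw [norm_smul, norm_inv, Real.norm_of_nonneg dist_nonneg, ← dist_eq_norm,
          inv_mul_cancel₀ hdist]
    have hmem : c + R • e ∈ sphere c R := by simp [norm_smul, he, abs_of_nonneg hR]
    calc infDist x (sphere c R) ≤ dist x (c + R • e) := infDist_le_dist_of_mem hmem
      _ = ‖(dist x c - R) • e‖ := by rw [dist_eq_norm, ← sub_sub, hxe, sub_smul]
      _ = |dist x c - R| := by rw [norm_smul, he, mul_one, Real.norm_eq_abs]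
  · simpa [mem_sphere.mp hy] using abs_dist_sub_le x y c

section Distance

variable {E : Type*} [NormedAddCommGroup E] [InnerProductSpace ℝ E]
  (K : Submodule ℝ E) [K.HasOrthogonalProjection]

lemma sq_dist_coe_eq_add_sq_norm_orthogonalProjectionOnto (x : E) (y : K) :
    dist x y ^ 2 =
      dist (K.orthogonalProjectionOnto x) y ^ 2 + ‖Kᗮ.orthogonalProjectionOnto x‖ ^ 2 := by
  rw [dist_eq_norm, dist_eq_norm, K.norm_sq_eq_add_norm_sq_projection]
  simp

lemma sq_infDist_coe_image_eq_add_sq_norm_orthogonalProjectionOnto (x : E) {A : Set K}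
    (hA : A.Nonempty) :
    infDist x ((↑) '' A) ^ 2 =
      infDist (K.orthogonalProjectionOnto x) A ^ 2 + ‖Kᗮ.orthogonalProjectionOnto x‖ ^ 2 := by
  have hpyth := sq_dist_coe_eq_add_sq_norm_orthogonalProjectionOnto K x
  refine le_antisymm ?_ ?_
  · rw [← sub_le_iff_le_add]
    refine (Real.sqrt_le_left infDist_nonneg).mp ((le_infDist hA).mpr fun y hy ↦ ?_)
    rw [Real.sqrt_le_left dist_nonneg, sub_le_iff_le_add, ← hpyth]
    exact pow_le_pow_left₀ infDist_nonneg (infDist_le_dist_of_mem (Set.mem_image_of_mem _ hy)) 2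
  · refine (Real.sqrt_le_left infDist_nonneg).mp ((le_infDist (hA.image _)).mpr ?_)
    rintro _ ⟨y, hy, rfl⟩
    rw [Real.sqrt_le_left dist_nonneg, hpyth]
    gcongr
    · exact infDist_nonneg
    · exact infDist_le_dist_of_mem hy

lemma sq_infDist_sphere_submodule [Nontrivial K] (x : E) {R : ℝ} (hR : 0 ≤ R) :
    infDist x {y | y ∈ K ∧ ‖y‖ = R} ^ 2 =
      (‖K.orthogonalProjectionOnto x‖ - R) ^ 2 + ‖Kᗮ.orthogonalProjectionOnto x‖ ^ 2 := by
  have himage : {y | y ∈ K ∧ ‖y‖ = R} = (↑) '' sphere (0 : K) R := by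
    ext y
    simp [and_comm]
  rw [himage, sq_infDist_coe_image_eq_add_sq_norm_orthogonalProjectionOnto K x
    (NormedSpace.sphere_nonempty.mpr hR), infDist_sphere 0 _ hR, sq_abs, dist_zero_right]

end Distance

/-- The subspace of `ℝ^ι` of vectors supported on the coordinates in `s`; for `s = {j | j < a}` it
is the coordinate subspace `ℝ^a × {0}` of `ℝⁿ`. -/
noncomputable def coordSubspace {ι : Type*} [Finite ι] (s : Set ι) :
    Submodule ℝ (EuclideanSpace ℝ ι) :=
  (Pi.spanSubset ℝ s).comap (WithLp.linearEquiv 2 ℝ (ι → ℝ)).toLinearMap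

lemma mem_coordSubspace {ι : Type*} [Finite ι] {s : Set ι} {x : EuclideanSpace ℝ ι} :
    x ∈ coordSubspace s ↔ ∀ j ∉ s, x j = 0 :=
  Pi.mem_spanSubset_iff

lemma finrank_coordSubspace {ι : Type*} [Finite ι] (s : Set ι) :
    finrank ℝ (coordSubspace s) = s.ncard := by
  rw [coordSubspace, LinearEquiv.finrank_eq
    ((WithLp.linearEquiv 2 ℝ (ι → ℝ)).ofSubmodule' (Pi.spanSubset ℝ s)), Pi.dim_spanSubset]

theorem tube_volume_embedded_sphere_general {E : Type*} [NormedAddCommGroup E]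
    [InnerProductSpace ℝ E] [FiniteDimensional ℝ E] [MeasurableSpace E] [BorelSpace E]
    {K : Submodule ℝ E} {m s : ℕ} (hK : finrank ℝ K = m + 1)
    (hE : finrank ℝ E = m + s) {R ε : ℝ} (hε : 0 ≤ ε) (hεR : ε ≤ R) :
    volume {x | infDist x {y | y ∈ K ∧ ‖y‖ = R} ≤ ε} =
      ENNReal.ofReal (2 * unitBallVol (m + 1) * ε ^ s *
        ∑ i ∈ range (m + 1) with Even i,
          (unitBallVol (s + i) / unitBallVol (i + 1)) * ((m + 1).choose (i + 1) : ℝ) *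
            R ^ (m - i) * ε ^ i) := by
  have : Nontrivial K := Module.nontrivial_of_finrank_pos (R := ℝ) (by omega)
  have hs : finrank ℝ Kᗮ + 1 = s := by have := K.finrank_add_finrank_orthogonal; omega
  let T : Set (WithLp 2 (K × Kᗮ)) := {z | (‖z.fst‖ - R) ^ 2 + ‖z.snd‖ ^ 2 ≤ ε ^ 2}
  have hT : MeasurableSet T := (isClosed_le (by fun_prop) continuous_const).measurableSet
  have htube : {x | infDist x {y | y ∈ K ∧ ‖y‖ = R} ≤ ε} = K.orthogonalDecomposition ⁻¹' T := by
    ext x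
    rw [Set.mem_preimage, K.orthogonalDecomposition_apply, Set.mem_ofPred_eq, Set.mem_ofPred_eq,
      WithLp.toLp_fst, WithLp.toLp_snd, ← sq_infDist_sphere_submodule K x (hε.trans hεR),
      sq_le_sq₀ infDist_nonneg hε]
  rw [htube, K.orthogonalDecomposition.measurePreserving.measure_preimage hT.nullMeasurableSet,
    volume_setOf_sq_norm_fst_sub_add_sq_norm_snd_le hε hεR, hK, ← hs, mul_sum, mul_sum]
  congr! 2 with i
  rw [Nat.add_sub_add_right, add_right_comm _ 1 i, add_assoc _ i 1]
  ring

/-- The volume of the `ε`-neighborhood in `ℝⁿ` of the unit `m`-sphere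
`S^m = {x : x_{m+2} = ⋯ = x_n = 0, ‖x‖ = 1}` equals
`2 ω_{m+1} ε^s ∑_{i even, 0 ≤ i ≤ m} (ω_{s+i}/ω_{i+1}) C(m+1, i+1) ε^i`,
where `s = n - m`, for `0 < ε < 1`. -/
theorem tube_volume_embedded_sphere
    (n m : ℕ) (hmn : m < n) (ε : ℝ) (hε0 : 0 < ε) (hε1 : ε < 1) :
    volume {x : EuclideanSpace ℝ (Fin n) |
        infDist x {y : EuclideanSpace ℝ (Fin n) |
          (∀ j : Fin n, m + 1 ≤ (j : ℕ) → y j = 0) ∧ ‖y‖ = 1} ≤ ε} =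
      ENNReal.ofReal (2 * unitBallVol (m + 1) * ε ^ (n - m) *
        ∑ i ∈ (range (m + 1)).filter (fun i => Even i),
          (unitBallVol (n - m + i) / unitBallVol (i + 1)) *
            ((m + 1).choose (i + 1) : ℝ) * ε ^ i) := by
  have hK : finrank ℝ (coordSubspace {j : Fin n | (j : ℕ) < m + 1}) = m + 1 := by
    rw [finrank_coordSubspace, Set.ncard_eq_toFinset_card', Set.toFinset_ofPred,
      Fin.card_filter_val_lt, min_eq_right hmn]
  have hE : finrank ℝ (EuclideanSpace ℝ (Fin n)) = m + (n - m) := by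
    simp [hmn.le]
  simpa [mem_coordSubspace] using tube_volume_embedded_sphere_general hK hE hε0.le hε1.le
end

section
/- Let n ≥ 1 and 1 ≤ s ≤ n, and let f_1,…,f_s : ℝ^n → ℝ be smooth functions whose common zero set V = {x ∈ ℝ^n : f_1(x) = ⋯ = f_s(x) = 0} is compact and nonempty, and such that at every p ∈ V the gradients ∇f_1(p),…,∇f_s(p) are linearly independent. Then for every unit vector w ∈ S^{n−1} there exists a point p ∈ V such that w ∈ span{∇f_1(p), …, ∇f_s(p)} (i.e. the generalized Gauss map of V is surjective onto S^{n−1}). -/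
/-!
Given a vector `w`, the height function `⟪w, ·⟫` attains a maximum on the compact set `V`.
Its gradient is the constant `w`, so at a maximum point Lagrange's multiplier rule gives a linear
relation between `w` and the gradients of the constraints. These gradients being independent,
`w` has a nonzero coefficient in the relation and hence lies in their span.
-/

open MeasureTheory Metric

open InnerProductSpace (toDual)

section toDual

variable {𝕜 E ι : Type*} [RCLike 𝕜] [NormedAddCommGroup E] [InnerProductSpace 𝕜 E]
  [CompleteSpace E] {v : ι → E} {w : E}

theorem linearIndependent_toDual_comp (hv : LinearIndependent 𝕜 v) :
    LinearIndependent 𝕜 (toDual 𝕜 E ∘ v) :=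
  hv.map_of_injective_injective (starRingEnd 𝕜) (toDual 𝕜 E).toAddMonoidHom
    (by simp) (by simp) (by simp)

theorem toDual_mem_span_range_comp_iff :
    toDual 𝕜 E w ∈ Submodule.span 𝕜 (Set.range (toDual 𝕜 E ∘ v)) ↔
      w ∈ Submodule.span 𝕜 (Set.range v) := by
  rw [Set.range_comp]
  exact Submodule.apply_mem_span_image_iff_mem_span
    (f := (toDual 𝕜 E).toLinearEquiv.toLinearMap) (toDual 𝕜 E).injective

end toDual

section LagrangeMultipliers

variable {E ι : Type*} [Finite ι] [NormedAddCommGroup E] [CompleteSpace E]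
  {f : ι → E → ℝ} {φ : E → ℝ} {p : E}

theorem fderiv_mem_span_of_isLocalExtrOn [NormedSpace ℝ E]
    {f' : ι → StrongDual ℝ E} {φ' : StrongDual ℝ E}
    (hextr : IsLocalExtrOn φ {x | ∀ i, f i x = f i p} p)
    (hf : ∀ i, HasStrictFDerivAt (f i) (f' i) p) (hφ : HasStrictFDerivAt φ φ' p)
    (hli : LinearIndependent ℝ f') :
    φ' ∈ Submodule.span ℝ (Set.range f') := by
  by_contra hφ'
  exact hextr.linear_dependent_of_hasStrictFDerivAt hf hφ
    (linearIndependent_option.2 ⟨hli, hφ'⟩)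

theorem gradient_mem_span_of_isLocalExtrOn [InnerProductSpace ℝ E] {g : ι → E} {w : E}
    (hextr : IsLocalExtrOn φ {x | ∀ i, f i x = f i p} p)
    (hf : ∀ i, HasStrictFDerivAt (f i) (toDual ℝ E (g i)) p)
    (hφ : HasStrictFDerivAt φ (toDual ℝ E w) p) (hli : LinearIndependent ℝ g) :
    w ∈ Submodule.span ℝ (Set.range g) :=
  toDual_mem_span_range_comp_iff.1 <|
    fderiv_mem_span_of_isLocalExtrOn hextr hf hφ (linearIndependent_toDual_comp hli)

end LagrangeMultipliers

theorem hasStrictFDerivAt_toDual_gradient {E : Type*} [NormedAddCommGroup E]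
    [InnerProductSpace ℝ E] [CompleteSpace E] {f : E → ℝ} {p : E} (hf : ContDiffAt ℝ 1 f p) :
    HasStrictFDerivAt f (toDual ℝ E (gradient f p)) p := by
  rw [toDual_gradient]
  exact hf.hasStrictFDerivAt one_ne_zero

theorem gauss_map_surjective_general {E ι : Type*} [Finite ι] [NormedAddCommGroup E]
    [InnerProductSpace ℝ E] [CompleteSpace E] {f : ι → E → ℝ} {V : Set E}
    (hV : V = {x | ∀ i, f i x = 0}) (hf : ∀ p ∈ V, ∀ i, ContDiffAt ℝ 1 (f i) p)
    (hcompact : IsCompact V) (hne : V.Nonempty)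
    (hci : ∀ p ∈ V, LinearIndependent ℝ fun i => gradient (f i) p) (w : E) :
    ∃ p ∈ V, w ∈ Submodule.span ℝ (Set.range fun i => gradient (f i) p) := by
  obtain ⟨p, hp, hmax⟩ := hcompact.exists_isMaxOn hne (toDual ℝ E w).continuous.continuousOn
  have hlevel : {x | ∀ i, f i x = f i p} = V := by
    have hzero : ∀ i, f i p = 0 := by rwa [hV] at hp
    simp only [hzero, hV]
  have hextr : IsLocalExtrOn (toDual ℝ E w) {x | ∀ i, f i x = f i p} p := by
    rw [hlevel]
    exact .inr hmax.localize
  exact ⟨p, hp, gradient_mem_span_of_isLocalExtrOn hextr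
    (fun i => hasStrictFDerivAt_toDual_gradient (hf p hp i))
    (toDual ℝ E w).hasStrictFDerivAt (hci p hp)⟩

/-- For a compact nonempty submanifold `V ⊆ ℝⁿ` given as the common zero set of
smooth functions `f₁, …, f_s` with linearly independent gradients on `V`, the
generalized Gauss map is surjective: every unit vector `w` is normal to `V` at some
point `p ∈ V`, i.e. `w` lies in the span of the gradients at `p`. -/
theorem gauss_map_surjective
    (n s : ℕ) (hn : 1 ≤ n) (hs : 1 ≤ s) (hsn : s ≤ n)
    (f : Fin s → EuclideanSpace ℝ (Fin n) → ℝ)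
    (hf : ∀ i, ContDiff ℝ (⊤ : ℕ∞) (f i))
    (V : Set (EuclideanSpace ℝ (Fin n)))
    (hV : V = {x | ∀ i, f i x = 0})
    (hcompact : IsCompact V) (hne : V.Nonempty)
    (hci : ∀ p ∈ V, LinearIndependent ℝ (fun i : Fin s => gradient (f i) p)) :
    ∀ w : EuclideanSpace ℝ (Fin n), ‖w‖ = 1 →
      ∃ p ∈ V, w ∈ Submodule.span ℝ (Set.range fun i : Fin s => gradient (f i) p) :=
  fun w _ => gauss_map_surjective_general hV
    (fun _ _ i => (hf i).contDiffAt.of_le (by simp)) hcompact hne hci w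
end
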